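/- arXiv:2103.05574 — 2 statements merged into one kernel-verified Lean document; each statement's English description precedes it below -/
import Mathlib

section
/- Let p ≥ 2, let μ₁ ∈ ℝ^p and β ∈ ℝ, and let X ∼ N(μ₁, I_p) and Y ∼ N(βμ₁, I_p) be independent. Define R(β̂) = inf_{b ∈ ℝ} (Y − bX)ᵀ(Y − bX)/(1 + b²). Then R(β̂) is stochastically dominated by the chi-squared distribution with p degrees of freedom: for every t ≥ 0, P(R(β̂) > t) ≤ P(Z > t) where Z ∼ χ²_p. -/
open MeasureTheory ProbabilityTheory

/-- The multivariate normal distribution `N(μ, I_p)` on `ℝ^p`, realized as the product of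
independent one-dimensional Gaussians `N(μ i, 1)`. -/
noncomputable def mvGaussianId (p : ℕ) (μ : Fin p → ℝ) : Measure (Fin p → ℝ) :=
  Measure.pi fun i => gaussianReal (μ i) 1

/-- The chi-squared distribution with `k` degrees of freedom, i.e. the Gamma distribution
with shape `k/2` and rate `1/2`. -/
noncomputable def chiSquared (k : ℝ) : Measure ℝ :=
  gammaMeasure (k / 2) (1 / 2)

/-!
The infimum defining `R(β̂)` is at most its value at the true slope `β`, so it suffices to find the
law of `∑ i, (Y i - β X i)² / (1 + β²)`. The means cancel: the coordinates of `Y - βX` are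
independent with law `N(0, 1 + β²)`, so this is a sum of `p` squared standard Gaussians. That such a
sum is `χ²_p` is read off moment generating functions, which determine a law as soon as they are
finite near `0`.
-/

section GammaDistribution

variable {a r t : ℝ}

lemma mgf_id_gammaMeasure (ha : 0 < a) (hr : 0 < r) (t : ℝ) :
    mgf id (gammaMeasure a r) t =
      r ^ a / Real.Gamma a * ∫ x in Set.Ioi 0, x ^ (a - 1) * Real.exp (-((r - t) * x)) := by
  have h_meas : Measurable (gammaPDF a r) := (measurable_gammaPDFReal a r).ennreal_ofReal
  rw [mgf, gammaMeasure, integral_withDensity_eq_integral_toReal_smul h_meas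
    (ae_of_all _ fun _ => ENNReal.ofReal_lt_top),
    ← integral_const_mul, ← integral_Ici_eq_integral_Ioi, ← integral_indicator measurableSet_Ici]
  refine integral_congr_ae (ae_of_all _ fun x => ?_)
  simp only [gammaPDF, smul_eq_mul, id, Set.indicator_apply, Set.mem_Ici,
    ENNReal.toReal_ofReal (gammaPDFReal_nonneg ha hr x)]
  rw [gammaPDFReal, ite_mul, zero_mul]
  congr 1
  rw [mul_assoc, ← Real.exp_add, mul_assoc]
  ring_nf

lemma mgf_id_gammaMeasure_of_lt (ha : 0 < a) (hr : 0 < r) (ht : t < r) :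
    mgf id (gammaMeasure a r) t = (r / (r - t)) ^ a := by
  have hrt : 0 < r - t := sub_pos.2 ht
  have hΓ := (Real.Gamma_pos_of_pos ha).ne'
  rw [mgf_id_gammaMeasure ha hr, Real.integral_rpow_mul_exp_neg_mul_Ioi ha hrt,
    Real.div_rpow hr.le hrt.le, Real.div_rpow zero_le_one hrt.le, Real.one_rpow]
  field_simp

-- The exponential moment is infinite here; the value `0` is that of a non-integrable integrand.
lemma mgf_id_gammaMeasure_of_le (ha : 0 < a) (hr : 0 < r) (ht : r ≤ t) :
    mgf id (gammaMeasure a r) t = 0 := by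
  rw [mgf_id_gammaMeasure ha hr, integral_undef, mul_zero]
  intro h_int
  refine not_integrableOn_Ioi_rpow (a - 1) (h_int.mono' (by fun_prop) ?_)
  filter_upwards [ae_restrict_mem measurableSet_Ioi] with x (hx : 0 < x)
  have h_exponent : 0 ≤ -((r - t) * x) := by nlinarith
  rw [Real.norm_of_nonneg (by positivity)]
  exact le_mul_of_one_le_right (by positivity) (Real.one_le_exp h_exponent)

lemma zero_mem_interior_integrableExpSet_gammaMeasure (ha : 0 < a) (hr : 0 < r) :
    0 ∈ interior (integrableExpSet id (gammaMeasure a r)) := by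
  refine mem_interior.2 ⟨Set.Iio r, fun t (ht : t < r) => ?_, isOpen_Iio, hr⟩
  have h_mgf : mgf id (gammaMeasure a r) t ≠ 0 := by
    rw [mgf_id_gammaMeasure_of_lt ha hr ht]
    exact (Real.rpow_pos_of_pos (div_pos hr (sub_pos.2 ht)) a).ne'
  exact Integrable.of_integral_ne_zero h_mgf

end GammaDistribution

lemma measure_eq_of_mgf_id_eq {μ ν : Measure ℝ} [IsProbabilityMeasure μ] [IsFiniteMeasure ν]
    (h_mgf : mgf id μ = mgf id ν) (h_zero : 0 ∈ interior (integrableExpSet id μ)) : μ = ν := by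
  refine Measure.ext_of_charFun (funext fun t => ?_)
  rw [← complexMGF_id_mul_I, ← complexMGF_id_mul_I]
  exact eqOn_complexMGF_of_mgf h_mgf (by simpa using h_zero)

section ChiSquared

variable {Ω ι : Type*} {mΩ : MeasurableSpace Ω} {P : Measure Ω} [Fintype ι]

lemma hasLaw_sum_gammaMeasure [Nonempty ι] {X : ι → Ω → ℝ} {a : ι → ℝ} {r : ℝ}
    (ha : ∀ i, 0 < a i) (hr : 0 < r) (hX : ∀ i, HasLaw (X i) (gammaMeasure (a i) r) P)
    (h_indep : iIndepFun X P) :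
    HasLaw (∑ i, X i) (gammaMeasure (∑ i, a i) r) P := by
  have ha_sum : 0 < ∑ i, a i := Finset.sum_pos (fun i _ => ha i) Finset.univ_nonempty
  have := h_indep.isProbabilityMeasure
  have := isProbabilityMeasure_gammaMeasure ha_sum hr
  have hX_meas (i : ι) : AEMeasurable (X i) P := (hX i).aemeasurable
  have h_sum_meas : AEMeasurable (∑ i, X i) P := Finset.aemeasurable_sum _ fun i _ => hX_meas i
  refine ⟨h_sum_meas, (measure_eq_of_mgf_id_eq (funext fun t => ?_)
    (zero_mem_interior_integrableExpSet_gammaMeasure ha_sum hr)).symm⟩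
  have h_prod : mgf id (P.map (∑ i, X i)) t = ∏ i, mgf id (gammaMeasure (a i) r) t := by
    simp_rw [mgf_id_map h_sum_meas, h_indep.mgf_sum₀ hX_meas, ← (hX _).map_eq,
      mgf_id_map (hX_meas _)]
  rw [h_prod]
  rcases lt_or_ge t r with ht | ht
  · simp_rw [mgf_id_gammaMeasure_of_lt ha_sum hr ht, mgf_id_gammaMeasure_of_lt (ha _) hr ht]
    exact Real.rpow_sum_of_pos (div_pos hr (sub_pos.2 ht)) a Finset.univ
  · simp [mgf_id_gammaMeasure_of_le ha_sum hr ht, mgf_id_gammaMeasure_of_le (ha _) hr ht]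

lemma mgf_sq_gaussianReal_zero_one (t : ℝ) :
    mgf (· ^ 2) (gaussianReal 0 1) t = √((1 / 2) / (1 / 2 - t)) := by
  have h_integrand (x : ℝ) : gaussianPDFReal 0 1 x • Real.exp (t * x ^ 2) =
      (√(2 * Real.pi))⁻¹ * Real.exp (-(1 / 2 - t) * x ^ 2) := by
    simp only [gaussianPDFReal, smul_eq_mul, NNReal.coe_one, mul_assoc, ← Real.exp_add]
    ring_nf
  simp_rw [mgf, integral_gaussianReal_eq_integral_smul one_ne_zero, h_integrand]
  rw [integral_const_mul, integral_gaussian, ← Real.sqrt_inv, ← Real.sqrt_mul (by positivity)]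
  congr 1
  field_simp

lemma gaussianReal_zero_one_map_sq : (gaussianReal 0 1).map (· ^ 2) = chiSquared 1 := by
  have h_half : (0 : ℝ) < 1 / 2 := one_half_pos
  have := isProbabilityMeasure_gammaMeasure h_half h_half
  refine (measure_eq_of_mgf_id_eq (funext fun t => ?_)
    (zero_mem_interior_integrableExpSet_gammaMeasure h_half h_half)).symm
  rw [mgf_id_map (by fun_prop), mgf_sq_gaussianReal_zero_one]
  rcases lt_or_ge t (1 / 2) with ht | ht
  · rw [mgf_id_gammaMeasure_of_lt h_half h_half ht, Real.sqrt_eq_rpow]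
  · rw [mgf_id_gammaMeasure_of_le h_half h_half ht, Real.sqrt_eq_zero_of_nonpos]
    exact div_nonpos_of_nonneg_of_nonpos h_half.le (sub_nonpos.2 ht)

lemma hasLaw_sub_sq_div_chiSquared_one {X : Ω → ℝ} {m : ℝ} {v : NNReal} (hv : v ≠ 0)
    (hX : HasLaw X (gaussianReal m v) P) :
    HasLaw (fun ω => (X ω - m) ^ 2 / v) (chiSquared 1) P := by
  have h_std : HasLaw (fun ω => (X ω - m) / √v) (gaussianReal 0 1) P := by
    convert gaussianReal_div_const (gaussianReal_sub_const hX m) √v using 2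
    · simp
    · ext
      simp [hv]
  have h_sq : HasLaw (· ^ 2) (chiSquared 1) (gaussianReal 0 1) :=
    ⟨by fun_prop, gaussianReal_zero_one_map_sq⟩
  simpa only [div_pow, Real.sq_sqrt v.coe_nonneg] using h_sq.fun_comp h_std

lemma hasLaw_sum_sub_sq_div_chiSquared [Nonempty ι] {W : Ω → ι → ℝ} {m : ι → ℝ} {v : ι → NNReal}
    (hv : ∀ i, v i ≠ 0) (hW : HasLaw W (Measure.pi fun i => gaussianReal (m i) (v i)) P) :
    HasLaw (fun ω => ∑ i, (W ω i - m i) ^ 2 / v i) (chiSquared (Fintype.card ι)) P := by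
  have := hW.isProbabilityMeasure
  have h_coord (i : ι) : HasLaw (fun ω => W ω i) (gaussianReal (m i) (v i)) P :=
    (measurePreserving_eval _ i).fun_comp_hasLaw hW
  have h_indep : iIndepFun (fun i ω => W ω i) P := (iIndepFun_iff_hasLaw_pi_pi h_coord).2 hW
  have h_sum := hasLaw_sum_gammaMeasure (fun _ => one_half_pos) one_half_pos
    (fun i => hasLaw_sub_sq_div_chiSquared_one (hv i) (h_coord i))
    (h_indep.comp (fun i x => (x - m i) ^ 2 / v i) (by fun_prop))
  simpa [chiSquared, Finset.sum_fn, div_eq_mul_inv] using h_sum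

end ChiSquared

section GaussianVectors

variable {Ω ι : Type*} {mΩ : MeasurableSpace Ω} {P : Measure Ω} [Fintype ι]

lemma pi_conv_pi {M : Type*} [AddMonoid M] [MeasurableSpace M] [MeasurableAdd₂ M]
    (μ ν : ι → Measure M) [∀ i, IsFiniteMeasure (μ i)] [∀ i, IsFiniteMeasure (ν i)] :
    (Measure.pi μ).conv (Measure.pi ν) = Measure.pi fun i => (μ i).conv (ν i) := by
  simp only [Measure.conv]
  rw [← (measurePreserving_arrowProdEquivProdArrow M M ι μ ν).map_eq,
    Measure.map_map (by fun_prop) (MeasurableEquiv.measurable _),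
    ← Measure.pi_map_pi fun _ => measurable_add.aemeasurable]
  rfl

lemma hasLaw_sub_mul_pi_gaussianReal {X Y : Ω → ι → ℝ} {m n : ι → ℝ} {v w : ι → NNReal}
    (hX : HasLaw X (Measure.pi fun i => gaussianReal (m i) (v i)) P)
    (hY : HasLaw Y (Measure.pi fun i => gaussianReal (n i) (w i)) P)
    (h_indep : IndepFun X Y P) (c : ℝ) :
    HasLaw (fun ω i => Y ω i - c * X ω i)
      (Measure.pi fun i => gaussianReal (n i - c * m i) (w i + .mk (c ^ 2) (sq_nonneg c) * v i))
      P := by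
  have h_scale : Measurable fun (x : ι → ℝ) i => -c * x i := by fun_prop
  have h_negX : HasLaw (fun ω i => -c * X ω i)
      (Measure.pi fun i => gaussianReal (-c * m i) (.mk ((-c) ^ 2) (sq_nonneg _) * v i)) P := by
    refine HasLaw.fun_comp (Y := fun (x : ι → ℝ) i => -c * x i) ⟨h_scale.aemeasurable, ?_⟩ hX
    simp_rw [← gaussianReal_map_const_mul]
    exact Measure.pi_map_pi fun _ => by fun_prop
  have h_add := (h_indep.symm.comp measurable_id h_scale).hasLaw_add hY h_negX
  rw [pi_conv_pi] at h_add
  simp_rw [gaussianReal_conv_gaussianReal] at h_add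
  convert h_add using 4
  · simp [sub_eq_add_neg]
  · ring
  · simp

end GaussianVectors

/-- The profile log-likelihood ratio `R(b) = (Y - bX)ᵀ(Y - bX) / (1 + b²)` at slope `b`, whose
infimum over `b` is `R(β̂)`. -/
noncomputable def profileLLR {ι : Type*} [Fintype ι] (x y : ι → ℝ) (b : ℝ) : ℝ :=
  (∑ i, (y i - b * x i) ^ 2) / (1 + b ^ 2)

lemma iInf_profileLLR_le {ι : Type*} [Fintype ι] (x y : ι → ℝ) (b : ℝ) :
    ⨅ c, profileLLR x y c ≤ profileLLR x y b :=
  ciInf_le ⟨0, Set.forall_mem_range.2 fun c => by unfold profileLLR; positivity⟩ b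

lemma hasLaw_profileLLR_chiSquared {Ω : Type*} {mΩ : MeasurableSpace Ω} {P : Measure Ω} {p : ℕ}
    (hp : p ≠ 0) {μ : Fin p → ℝ} {β : ℝ} {X Y : Ω → Fin p → ℝ}
    (hX : HasLaw X (mvGaussianId p μ) P) (hY : HasLaw Y (mvGaussianId p fun i => β * μ i) P)
    (h_indep : IndepFun X Y P) :
    HasLaw (fun ω => profileLLR (X ω) (Y ω) β) (chiSquared p) P := by
  have : Nonempty (Fin p) := Fin.pos_iff_nonempty.1 (Nat.pos_of_ne_zero hp)
  have h_resid := hasLaw_sub_mul_pi_gaussianReal hX hY h_indep β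
  have h_sum := hasLaw_sum_sub_sq_div_chiSquared (fun _ => by positivity) h_resid
  simpa [profileLLR, Finset.sum_div] using h_sum

/-- If `X ∼ N(μ₁, I_p)` and `Y ∼ N(βμ₁, I_p)` are independent with `p ≥ 2`, then
`R(β̂) = inf_b (Y - bX)ᵀ(Y - bX)/(1 + b²)` is stochastically dominated by `χ²_p`. -/
theorem profile_llr_stochastically_dominated_by_chiSq
    {Ω : Type*} [MeasureSpace Ω] [IsProbabilityMeasure (ℙ : Measure Ω)]
    (p : ℕ) (hp : 2 ≤ p) (μ₁ : Fin p → ℝ) (β : ℝ)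
    (X Y : Ω → Fin p → ℝ) (hX : Measurable X) (hY : Measurable Y)
    (hXlaw : Measure.map X ℙ = mvGaussianId p μ₁)
    (hYlaw : Measure.map Y ℙ = mvGaussianId p (fun i => β * μ₁ i))
    (hindep : IndepFun X Y ℙ)
    (R : Ω → ℝ)
    (hR : ∀ ω, R ω = ⨅ b : ℝ, (∑ i, (Y ω i - b * X ω i) ^ 2) / (1 + b ^ 2)) :
    ∀ t : ℝ, 0 ≤ t → ℙ {ω | R ω > t} ≤ chiSquared (p : ℝ) {z | z > t} := by
  intro t _
  have hβ : HasLaw (fun ω => profileLLR (X ω) (Y ω) β) (chiSquared p) ℙ :=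
    hasLaw_profileLLR_chiSquared (by omega) ⟨hX.aemeasurable, hXlaw⟩ ⟨hY.aemeasurable, hYlaw⟩
      hindep
  have hR_le (ω : Ω) : R ω ≤ profileLLR (X ω) (Y ω) β :=
    (hR ω).trans_le (iInf_profileLLR_le (X ω) (Y ω) β)
  calc ℙ {ω | R ω > t}
    _ ≤ ℙ {ω | profileLLR (X ω) (Y ω) β > t} :=
      measure_mono fun ω (hω : t < R ω) => hω.trans_le (hR_le ω)
    _ = chiSquared p {z | z > t} := hβ.measure_eq measurableSet_Ioi
end

section
/- Fix an integer j ≥ 1 and a real x ≥ (j+1)/√(j(j+2)) with x > 1. If j·P_{j−1}(x) ≤ (j+1)·(x − √(x² − 1))·P_j(x), then (j+1)·P_j(x) ≤ (j+2)·(x − √(x² − 1))·P_{j+1}(x). (This is the induction step of the key Legendre inequality in the regime x ≥ (j+1)/√(j(j+2)).) -/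
/-- The Legendre polynomials, as real functions: `P₀(x) = 1`, `P₁(x) = x`, and Bonnet's
recursion `(j+1) P_{j+1}(x) = (2j+1) x P_j(x) - j P_{j-1}(x)` for `j ≥ 1`. -/
noncomputable def legendreP : ℕ → ℝ → ℝ
  | 0, _ => 1
  | 1, x => x
  | n + 2, x =>
      ((2 * (n : ℝ) + 3) * x * legendreP (n + 1) x - ((n : ℝ) + 1) * legendreP n x) /
        ((n : ℝ) + 2)

/-!
The number `u = x - √(x² - 1)` enters only through `u² + 1 = 2xu`. If `(j + 2) u² ≤ j`, Bonnet's
recursion carries the inequality from `j - 1` to `j`. If `(j + 2) u² ≥ j`, the inequality at `j`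
holds outright: `x P_j ≤ P_{j+1}`, and `2(j + 2) u x = (j + 2)(u² + 1) ≥ 2(j + 1)`. So the
inequality holds for all `j ≥ 0` and `x ≥ 1`, the case `j = 0` being of the second kind.
-/

theorem legendreP_bonnet (n : ℕ) (x : ℝ) :
    ((n : ℝ) + 2) * legendreP (n + 2) x =
      (2 * (n : ℝ) + 3) * x * legendreP (n + 1) x - ((n : ℝ) + 1) * legendreP n x := by
  rw [legendreP]
  exact mul_div_cancel₀ _ (by positivity)

section

variable {x u : ℝ}

theorem legendreP_pos_and_mul_le_succ (hx : 1 ≤ x) (n : ℕ) :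
    0 < legendreP n x ∧ x * legendreP n x ≤ legendreP (n + 1) x := by
  induction n with
  | zero => simp [legendreP]
  | succ n ih =>
    obtain ⟨pos, mul_le⟩ := ih
    have mono : legendreP n x ≤ legendreP (n + 1) x :=
      (le_mul_of_one_le_left pos.le hx).trans mul_le
    have pos_succ : 0 < legendreP (n + 1) x := pos.trans_le mono
    have le_mul_succ : legendreP n x ≤ x * legendreP (n + 1) x :=
      mono.trans (le_mul_of_one_le_left pos_succ.le hx)
    refine ⟨pos_succ, le_of_mul_le_mul_left ?_ (by positivity : (0 : ℝ) < n + 2)⟩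
    calc ((n : ℝ) + 2) * (x * legendreP (n + 1) x)
        = (2 * n + 3) * x * legendreP (n + 1) x - (n + 1) * (x * legendreP (n + 1) x) := by ring
      _ ≤ (2 * n + 3) * x * legendreP (n + 1) x - (n + 1) * legendreP n x := by gcongr
      _ = (n + 2) * legendreP (n + 2) x := (legendreP_bonnet n x).symm

theorem legendreP_pos (hx : 1 ≤ x) (n : ℕ) : 0 < legendreP n x :=
  (legendreP_pos_and_mul_le_succ hx n).1

theorem mul_legendreP_le_succ (hx : 1 ≤ x) (n : ℕ) : x * legendreP n x ≤ legendreP (n + 1) x :=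
  (legendreP_pos_and_mul_le_succ hx n).2

theorem pos_of_sq_add_one_eq (hx : 0 ≤ x) (hu : u ^ 2 + 1 = 2 * x * u) : 0 < u :=
  pos_of_mul_pos_right (hu ▸ by positivity : 0 < 2 * x * u) (by positivity)

theorem sub_sqrt_sq_add_one (hx : 1 ≤ x) :
    (x - √(x ^ 2 - 1)) ^ 2 + 1 = 2 * x * (x - √(x ^ 2 - 1)) := by
  have sq_sqrt : √(x ^ 2 - 1) ^ 2 = x ^ 2 - 1 := Real.sq_sqrt (sub_nonneg.2 (one_le_pow₀ hx))
  linear_combination sq_sqrt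

theorem add_one_mul_legendreP_le_of_le_sq (hx : 1 ≤ x) (hu : u ^ 2 + 1 = 2 * x * u) {n : ℕ}
    (hn : (n : ℝ) ≤ (n + 2) * u ^ 2) :
    ((n : ℝ) + 1) * legendreP n x ≤ (n + 2) * u * legendreP (n + 1) x := by
  have u_pos : 0 < u := pos_of_sq_add_one_eq (zero_le_one.trans hx) hu
  have coeff_le : (n : ℝ) + 1 ≤ (n + 2) * u * x := by
    linear_combination hn / 2 + (n + 2) / 2 * hu
  calc ((n : ℝ) + 1) * legendreP n x
      ≤ (n + 2) * u * x * legendreP n x :=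
        mul_le_mul_of_nonneg_right coeff_le (legendreP_pos hx n).le
    _ = (n + 2) * u * (x * legendreP n x) := mul_assoc _ _ _
    _ ≤ (n + 2) * u * legendreP (n + 1) x := by
        gcongr
        exact mul_legendreP_le_succ hx n

theorem add_one_mul_legendreP_succ_le_of_sq_le (hx : 1 ≤ x) (hu : u ^ 2 + 1 = 2 * x * u) {n : ℕ}
    (hn : ((n : ℝ) + 3) * u ^ 2 ≤ n + 1)
    (ih : ((n : ℝ) + 1) * legendreP n x ≤ (n + 2) * u * legendreP (n + 1) x) :
    ((n : ℝ) + 2) * legendreP (n + 1) x ≤ (n + 3) * u * legendreP (n + 2) x := by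
  have u_pos : 0 < u := pos_of_sq_add_one_eq (zero_le_one.trans hx) hu
  have coeff_le : ((n : ℝ) + 2) ^ 2 ≤ (n + 3) * u * ((2 * n + 3) * x - (n + 2) * u) := by
    linear_combination hn / 2 + (n + 3) * (2 * n + 3) / 2 * hu
  refine le_of_mul_le_mul_left ?_ (by positivity : (0 : ℝ) < n + 2)
  calc ((n : ℝ) + 2) * ((n + 2) * legendreP (n + 1) x)
      = (n + 2) ^ 2 * legendreP (n + 1) x := by ring
    _ ≤ (n + 3) * u * ((2 * n + 3) * x - (n + 2) * u) * legendreP (n + 1) x :=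
        mul_le_mul_of_nonneg_right coeff_le (legendreP_pos hx _).le
    _ = (n + 3) * u *
          ((2 * n + 3) * x * legendreP (n + 1) x - (n + 2) * u * legendreP (n + 1) x) := by ring
    _ ≤ (n + 3) * u * ((2 * n + 3) * x * legendreP (n + 1) x - (n + 1) * legendreP n x) := by
        gcongr
    _ = (n + 3) * u * ((n + 2) * legendreP (n + 2) x) := by rw [legendreP_bonnet]
    _ = (n + 2) * ((n + 3) * u * legendreP (n + 2) x) := by ring

end

theorem legendre_key_inequality_induction_step_general (j : ℕ) {x : ℝ} (hx : 1 ≤ x) :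
    ((j : ℝ) + 1) * legendreP j x ≤ (j + 2) * (x - √(x ^ 2 - 1)) * legendreP (j + 1) x := by
  have hu := sub_sqrt_sq_add_one hx
  induction j with
  | zero => exact add_one_mul_legendreP_le_of_le_sq hx hu (by simpa using sq_nonneg _)
  | succ n ih =>
    rcases le_total ((n + 1 : ℕ) : ℝ) (((n + 1 : ℕ) + 2) * (x - √(x ^ 2 - 1)) ^ 2)
      with le_sq | sq_le
    · exact add_one_mul_legendreP_le_of_le_sq hx hu le_sq
    · have cast_add_one : ((n + 1 : ℕ) : ℝ) + 1 = n + 2 := by push_cast; ring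
      have cast_add_two : ((n + 1 : ℕ) : ℝ) + 2 = n + 3 := by push_cast; ring
      rw [cast_add_two, Nat.cast_succ] at sq_le
      rw [cast_add_one, cast_add_two]
      exact add_one_mul_legendreP_succ_le_of_sq_le hx hu sq_le ih

/-- Induction step of the key Legendre inequality in the regime `x ≥ (j+1)/√(j(j+2))`:
if `j P_{j-1}(x) ≤ (j+1)(x - √(x²-1)) P_j(x)`, then
`(j+1) P_j(x) ≤ (j+2)(x - √(x²-1)) P_{j+1}(x)`. -/
theorem legendre_key_inequality_induction_step (j : ℕ) (hj : 1 ≤ j) (x : ℝ) (hx1 : 1 < x)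
    (hx2 : ((j : ℝ) + 1) / Real.sqrt ((j : ℝ) * ((j : ℝ) + 2)) ≤ x)
    (hind : (j : ℝ) * legendreP (j - 1) x
        ≤ ((j : ℝ) + 1) * (x - Real.sqrt (x ^ 2 - 1)) * legendreP j x) :
    ((j : ℝ) + 1) * legendreP j x
      ≤ ((j : ℝ) + 2) * (x - Real.sqrt (x ^ 2 - 1)) * legendreP (j + 1) x :=
  legendre_key_inequality_induction_step_general j hx1.le
end
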